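/- As n → ∞, the total pair sum over all pairs with at least two gaps vanishes: Σ_{s=1}^{n−2} Σ_{g=2}^{min{s+1, ⌊(n−s)/2⌋}} c_{s,g} → 0. -/

import Mathlib

open MeasureTheory Filter

namespace RandomHypercube

/-- Index of a (potential) hypercube edge: the lower endpoint `A` together with the
direction `i` that is added, representing the edge from `A` to `A ∪ {i}`. -/
abbrev EdgeIdx (n : ℕ) := Finset (Fin n) × Fin n

/-- The sample space: an i.i.d. Uniform[0,1] weight for each edge index. -/
abbrev CubeOmega (n : ℕ) := EdgeIdx n → ℝ

/-- The product of uniform measures on [0,1], one for each edge. -/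
noncomputable def cubeMeasure (n : ℕ) : Measure (CubeOmega n) :=
  Measure.pi fun _ => (volume : Measure ℝ).restrict (Set.Icc 0 1)

/-- The vertex visited by the direct path associated to the permutation `σ`
just before taking its `j`-th step: the image under `σ` of `{0, …, j-1}`. -/
def initSeg (n : ℕ) (σ : Equiv.Perm (Fin n)) (j : Fin n) : Finset (Fin n) :=
  (Finset.univ.filter fun i => i < j).image σ

/-- The edge used in the `j`-th step of the direct path associated to `σ`. -/
def pathEdge (n : ℕ) (σ : Equiv.Perm (Fin n)) (j : Fin n) : EdgeIdx n :=
  (initSeg n σ j, σ j)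

/-- The direct path associated to `σ` is accessible if its successive edge
weights are strictly increasing. -/
def Accessible (n : ℕ) (σ : Equiv.Perm (Fin n)) (ω : CubeOmega n) : Prop :=
  StrictMono fun j : Fin n => ω (pathEdge n σ j)

/-- The number of accessible direct paths from `∅` to `[n]`. -/
noncomputable def X (n : ℕ) (ω : CubeOmega n) : ℕ :=
  Nat.card {σ : Equiv.Perm (Fin n) // Accessible n σ ω}


/-- The set of steps `j` at which the direct paths of `σ` and `σ'` use the same edge
(shared edges necessarily occur at the same level in both paths). -/
def sharedSteps (n : ℕ) (σ σ' : Equiv.Perm (Fin n)) : Finset (Fin n) :=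
  Finset.univ.filter fun j => pathEdge n σ j = pathEdge n σ' j

/-- Given the sorted list `l` of steps (levels) of the shared edges, the gap vector:
the number of edges before the first shared edge, strictly between consecutive shared
edges, and after the last shared edge. -/
def gapsOfList (n : ℕ) (l : List ℕ) : List ℕ :=
  List.zipWith (fun a b => b - a) (0 :: l.map (· + 1)) (l ++ [n])

/-- The gap vector of the direct path of `σ'` relative to that of `σ`. -/
def gapVector (n : ℕ) (σ σ' : Equiv.Perm (Fin n)) : List ℕ :=
  gapsOfList n (((sharedSteps n σ σ').sort (· ≤ ·)).map Fin.val)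

/-- The number of (nontrivial) gaps between the direct paths of `σ` and `σ'`:
the number of nonzero entries of the gap vector. -/
def numGaps (n : ℕ) (σ σ' : Equiv.Perm (Fin n)) : ℕ :=
  ((gapVector n σ σ').filter (· != 0)).length

/-- The probability that the direct paths of `σ` and `σ'` are both accessible. -/
noncomputable def pairProb (n : ℕ) (σ σ' : Equiv.Perm (Fin n)) : ℝ :=
  (cubeMeasure n {ω | Accessible n σ ω ∧ Accessible n σ' ω}).toReal

/-- `c n s g`: the sum, over all ordered pairs of direct paths sharing exactly `s`
edges with `g` gaps, of the probability that both paths are accessible. -/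
noncomputable def c (n s g : ℕ) : ℝ :=
  ∑ p ∈ Finset.univ.filter
      (fun p : Equiv.Perm (Fin n) × Equiv.Perm (Fin n) =>
        (sharedSteps n p.1 p.2).card = s ∧ numGaps n p.1 p.2 = g),
    pairProb n p.1 p.2

/-- `w m`: the number of direct paths from `∅` to `[m]` in the `m`-dimensional hypercube
that are edge-disjoint from the canonical path (the identity permutation). -/
noncomputable def w (m : ℕ) : ℕ :=
  Nat.card {σ : Equiv.Perm (Fin m) // sharedSteps m σ 1 = ∅}

end RandomHypercube


namespace RandomHypercube

lemma rank_bound {β : Type*} [Fintype β] [DecidableEq β] {n N : ℕ}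
    (p q : Fin n → β) (hpq : ∀ i j, p i = q j → i = j)
    (hsurj : ∀ y, (∃ i, y = p i) ∨ (∃ i, y = q i))
    (X : Finset (β ≃ Fin N))
    (hX : ∀ ρ ∈ X, StrictMono (fun j => ρ (p j)) ∧ StrictMono (fun j => ρ (q j))) :
    X.card ≤ 2 ^ (N - (Finset.univ.filter fun j => p j = q j).card) := by
  classical
  rcases X.eq_empty_or_nonempty with h0 | ⟨ρ0, h0⟩
  · simp [h0]
  set S := Finset.univ.filter fun j => p j = q j with hS
  have hS' : ∀ j, j ∈ S ↔ p j = q j := by intro j; simp [hS]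
  have key0 : ∀ ρ ∈ X, ∀ j ∈ S, ∀ y, ρ y < ρ (p j) ↔ ∃ i < j, y = p i ∨ y = q i := by
    intro ρ hρ j hj y
    obtain ⟨h1, h2⟩ := hX ρ hρ
    have hj' := (hS' j).1 hj
    constructor
    · intro hlt
      rcases hsurj y with ⟨i, rfl⟩ | ⟨i, rfl⟩
      · exact ⟨i, h1.lt_iff_lt.1 hlt, Or.inl rfl⟩
      · rw [hj'] at hlt
        exact ⟨i, h2.lt_iff_lt.1 hlt, Or.inr rfl⟩
    · rintro ⟨i, hij, rfl | rfl⟩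
      · exact h1 hij
      · rw [hj']; exact h2 hij
  have rk : ∀ (ρ : β ≃ Fin N) (x : β), (Finset.univ.filter fun y => ρ y < ρ x).card = (ρ x : ℕ) := by
    intro ρ x
    rw [← Fin.card_Iio (ρ x), ← Finset.card_map ρ.toEmbedding]
    congr 1
    ext z
    simp only [Finset.mem_map, Finset.mem_filter, Finset.mem_univ, true_and, Finset.mem_Iio]
    constructor
    · rintro ⟨y, hy, rfl⟩; exact hy
    · intro hz; exact ⟨ρ.symm z, by simpa using hz, by simp⟩
  have key : ∀ ρ ∈ X, ∀ j ∈ S, ρ (p j) = ρ0 (p j) := by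
    intro ρ hρ j hj
    apply Fin.ext
    rw [← rk, ← rk]
    congr 1
    ext y
    simp [key0 ρ hρ j hj, key0 ρ0 h0 j hj]
  set R := S.image (fun j => ρ0 (p j)) with hR
  have hRc : R.card = S.card :=
    Finset.card_image_of_injective _ (hX ρ0 h0).1.injective
  have hcard : (Finset.Icc R Finset.univ).card = 2 ^ (N - S.card) := by
    rw [Finset.card_Icc_finset (Finset.subset_univ _), hRc]; simp
  rw [← hcard]
  refine Finset.card_le_card_of_injOn (fun ρ => Finset.univ.image (fun j => ρ (p j))) ?_ ?_
  · intro ρ hρ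
    simp only [Finset.coe_Icc, Set.mem_Icc, Finset.subset_univ, and_true]
    intro z hz
    obtain ⟨j, hj, rfl⟩ := Finset.mem_image.1 hz
    rw [← key ρ hρ j hj]
    exact Finset.mem_image_of_mem _ (Finset.mem_univ _)
  · intro ρ hρ ρ' hρ' heq
    simp only at heq
    have hr : Set.range (fun j => ρ (p j)) = Set.range (fun j => ρ' (p j)) := by
      have := congrArg (fun s : Finset (Fin N) => (s : Set (Fin N))) heq
      simpa using this
    have ea := ((hX ρ hρ).1.range_inj (hX ρ' hρ').1).1 hr
    have hq : ∀ (ρ : β ≃ Fin N), ρ ∈ X → Set.range (fun j => ρ (q j)) =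
        (Set.range (fun j => ρ (p j)))ᶜ ∪ (R : Set (Fin N)) := by
      intro ρ hρ
      ext z
      simp only [Set.mem_range, Set.mem_union, Set.mem_compl_iff, not_exists, Finset.mem_coe, hR,
        Finset.mem_image]
      constructor
      · rintro ⟨j, rfl⟩
        by_cases hj : j ∈ S
        · right
          exact ⟨j, hj, by rw [← key ρ hρ j hj, (hS' j).1 hj]⟩
        · left
          intro i hi
          have := ρ.injective hi
          have hij := hpq _ _ this
          subst hij
          exact hj ((hS' _).2 this)
      · rintro (h | ⟨j, hj, rfl⟩)
        · rcases hsurj (ρ.symm z) with ⟨i, hi⟩ | ⟨i, hi⟩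
          · exact absurd (by rw [← hi]; simp) (h i)
          · exact ⟨i, by rw [← hi]; simp⟩
        · exact ⟨j, by rw [← key ρ hρ j hj, (hS' j).1 hj]⟩
    have hr2 : Set.range (fun j => ρ (q j)) = Set.range (fun j => ρ' (q j)) := by
      rw [hq ρ hρ, hq ρ' hρ', hr]
    have eb := ((hX ρ hρ).2.range_inj (hX ρ' hρ').2).1 hr2
    ext y
    rcases hsurj y with ⟨i, rfl⟩ | ⟨i, rfl⟩
    · exact congrArg Fin.val (congrFun ea i)
    · exact congrArg Fin.val (congrFun eb i)

lemma perm_bound {β : Type*} [Fintype β] [DecidableEq β] {n : ℕ}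
    (p q : Fin n → β) (hpq : ∀ i j, p i = q j → i = j)
    (hsurj : ∀ y, (∃ i, y = p i) ∨ (∃ i, y = q i)) (ω : β → ℝ)
    (T : Finset (Equiv.Perm β))
    (hT : ∀ τ ∈ T, StrictMono (fun j => ω (τ (p j))) ∧ StrictMono (fun j => ω (τ (q j)))) :
    T.card ≤ 2 ^ (Fintype.card β - (Finset.univ.filter fun j => p j = q j).card) := by
  classical
  obtain ⟨e⟩ : Nonempty (β ≃ Fin (Fintype.card β)) := ⟨Fintype.equivFin β⟩
  set f := ω ∘ e.symm
  set r : β ≃ Fin (Fintype.card β) := e.trans (Tuple.sort f).symm with hr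
  have hmono : ∀ a b, ω a < ω b → r a < r b := by
    intro a b hab
    by_contra hcon
    have := Tuple.monotone_sort f (not_lt.1 hcon)
    simp [hr, f] at this
    linarith
  let emb : Equiv.Perm β ↪ (β ≃ Fin (Fintype.card β)) :=
    ⟨fun τ => τ.trans r, by
      intro a b hab
      ext x
      have := congrArg (fun g : β ≃ Fin (Fintype.card β) => g x) hab
      simpa using this⟩
  rw [← Finset.card_map emb]
  apply rank_bound p q hpq hsurj
  intro ρ hρ
  obtain ⟨τ, hτ, rfl⟩ := Finset.mem_map.1 hρ
  obtain ⟨h1, h2⟩ := hT τ hτ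
  exact ⟨fun i j hij => hmono _ _ (h1 hij), fun i j hij => hmono _ _ (h2 hij)⟩

lemma card_initSeg (n : ℕ) (σ : Equiv.Perm (Fin n)) (j : Fin n) :
    (initSeg n σ j).card = j := by
  unfold initSeg
  rw [Finset.card_image_of_injective _ σ.injective, ← Fin.card_Iio j]
  congr 1
  ext; simp

lemma pathEdge_level {n : ℕ} {σ σ' : Equiv.Perm (Fin n)} {i j : Fin n}
    (h : pathEdge n σ i = pathEdge n σ' j) : i = j := by
  have := congrArg (fun e : EdgeIdx n => e.1.card) h
  simp only [pathEdge, card_initSeg] at this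
  exact Fin.ext this

instance (n : ℕ) : IsProbabilityMeasure (cubeMeasure n) := by
  unfold cubeMeasure
  have : IsProbabilityMeasure ((volume : Measure ℝ).restrict (Set.Icc 0 1)) :=
    ⟨by simp⟩
  infer_instance

lemma cube_perm (n : ℕ) (τ : Equiv.Perm (EdgeIdx n)) :
    MeasurePreserving (fun ω : CubeOmega n => fun e => ω (τ e)) (cubeMeasure n) (cubeMeasure n) := by
  unfold cubeMeasure
  have := measurePreserving_piCongrLeft
    (fun _ : EdgeIdx n => (volume : Measure ℝ).restrict (Set.Icc 0 1)) τ.symm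
  convert this using 1
  ext ω e
  have := MeasurableEquiv.piCongrLeft_apply_apply (β := fun _ : EdgeIdx n => ℝ) τ.symm ω (τ e)
  simpa using this.symm

lemma measurable_acc (n : ℕ) (σ : Equiv.Perm (Fin n)) :
    MeasurableSet {ω : CubeOmega n | Accessible n σ ω} := by
  have : {ω : CubeOmega n | Accessible n σ ω} =
      ⋂ i : Fin n, ⋂ j : Fin n, ⋂ _ : i < j, {ω | ω (pathEdge n σ i) < ω (pathEdge n σ j)} := by
    ext ω
    simp [Accessible, StrictMono]
  rw [this]
  refine MeasurableSet.iInter fun i => MeasurableSet.iInter fun j => MeasurableSet.iInter fun _ => ?_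
  exact measurableSet_lt (measurable_pi_apply _) (measurable_pi_apply _)

lemma pairProb_le (n : ℕ) (σ σ' : Equiv.Perm (Fin n)) :
    pairProb n σ σ' ≤ 4 ^ (n - (sharedSteps n σ σ').card) /
      ((2 * n - (sharedSteps n σ σ').card).factorial : ℝ) := by
  classical
  set s := (sharedSteps n σ σ').card with hs
  set E : Finset (EdgeIdx n) :=
    Finset.univ.image (pathEdge n σ) ∪ Finset.univ.image (pathEdge n σ') with hE
  have hsn : s ≤ n := by
    have := Finset.card_le_univ (sharedSteps n σ σ'); simpa using this
  have hinj : ∀ σ, Function.Injective (pathEdge n σ) := fun σ i j h => pathEdge_level h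
  have hEc : E.card = 2 * n - s := by
    have h1 := Finset.card_union_add_card_inter (Finset.univ.image (pathEdge n σ))
      (Finset.univ.image (pathEdge n σ'))
    have h2 : (Finset.univ.image (pathEdge n σ)) ∩ (Finset.univ.image (pathEdge n σ')) =
        (sharedSteps n σ σ').image (pathEdge n σ) := by
      ext e
      simp only [Finset.mem_inter, Finset.mem_image, Finset.mem_univ, true_and, sharedSteps,
        Finset.mem_filter]
      constructor
      · rintro ⟨⟨i, rfl⟩, j, hj⟩
        have := pathEdge_level hj
        subst this
        exact ⟨j, hj.symm, rfl⟩
      · rintro ⟨j, hj, rfl⟩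
        exact ⟨⟨j, rfl⟩, j, hj.symm⟩
    rw [← hE, h2, Finset.card_image_of_injective _ (hinj σ), Finset.card_image_of_injective _ (hinj σ),
      Finset.card_image_of_injective _ (hinj σ')] at h1
    simp only [Finset.card_univ, Fintype.card_fin] at h1
    omega
  let p : Fin n → E := fun j => ⟨pathEdge n σ j, by simp [hE]⟩
  let q : Fin n → E := fun j => ⟨pathEdge n σ' j, by simp [hE]⟩
  have hpq : ∀ i j, p i = q j → i = j := fun i j h => pathEdge_level (congrArg Subtype.val h)
  have hsurj : ∀ y, (∃ i, y = p i) ∨ (∃ i, y = q i) := by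
    rintro ⟨y, hy⟩
    rcases Finset.mem_union.1 hy with h | h
    · obtain ⟨i, _, rfl⟩ := Finset.mem_image.1 h
      exact Or.inl ⟨i, rfl⟩
    · obtain ⟨i, _, rfl⟩ := Finset.mem_image.1 h
      exact Or.inr ⟨i, rfl⟩
  have hsh : (Finset.univ.filter fun j => p j = q j).card = s := by
    rw [hs]; congr 1; ext j; simp [sharedSteps, p, q]
  set B : Set (CubeOmega n) := {ω | Accessible n σ ω ∧ Accessible n σ' ω} with hB
  have hBm : MeasurableSet B := (measurable_acc n σ).inter (measurable_acc n σ')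
  let ext' : Equiv.Perm E → Equiv.Perm (EdgeIdx n) := fun τ => Equiv.Perm.ofSubtype τ
  let Bt : Equiv.Perm E → Set (CubeOmega n) := fun τ => (fun ω e => ω (ext' τ e)) ⁻¹' B
  have hBtm : ∀ τ, MeasurableSet (Bt τ) := fun τ => (cube_perm n (ext' τ)).measurable hBm
  have hmeas : ∀ τ, cubeMeasure n (Bt τ) = cubeMeasure n B := fun τ =>
    (cube_perm n (ext' τ)).measure_preimage hBm.nullMeasurableSet
  have hpt : ∀ ω, ∑ τ : Equiv.Perm E, (Bt τ).indicator (fun _ => (1 : ENNReal)) ω ≤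
      (2 ^ (2 * n - s - s) : ℕ) := by
    intro ω
    have hb := perm_bound p q hpq hsurj (fun e => ω e.1)
      (Finset.univ.filter fun τ : Equiv.Perm E => ω ∈ Bt τ) (by
        intro τ hτ
        have hτ' : ω ∈ Bt τ := (Finset.mem_filter.1 hτ).2
        obtain ⟨h1, h2⟩ := hτ'
        have ep : ∀ j, ext' τ (pathEdge n σ j) = (τ (p j) : EdgeIdx n) := fun j =>
          Equiv.Perm.ofSubtype_apply_coe τ (p j)
        have eq : ∀ j, ext' τ (pathEdge n σ' j) = (τ (q j) : EdgeIdx n) := fun j =>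
          Equiv.Perm.ofSubtype_apply_coe τ (q j)
        constructor
        · intro i j hij
          have := h1 hij
          simp only [ep] at this
          exact this
        · intro i j hij
          have := h2 hij
          simp only [eq] at this
          exact this)
    rw [hsh, Fintype.card_coe, hEc] at hb
    have : ∑ τ : Equiv.Perm E, (Bt τ).indicator (fun _ => (1 : ENNReal)) ω =
      ((Finset.univ.filter fun τ : Equiv.Perm E => ω ∈ Bt τ).card : ENNReal) := by
      simp [Set.indicator_apply]
    rw [this]
    exact_mod_cast hb
  have hint : ((2 * n - s).factorial : ENNReal) * cubeMeasure n B ≤ (2 ^ (2 * n - s - s) : ℕ) := by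
    calc ((2 * n - s).factorial : ENNReal) * cubeMeasure n B
        = ∑ τ : Equiv.Perm E, cubeMeasure n (Bt τ) := by
          simp [hmeas, Fintype.card_perm, hEc]
      _ = ∑ τ : Equiv.Perm E, ∫⁻ ω, (Bt τ).indicator (fun _ => (1 : ENNReal)) ω ∂(cubeMeasure n) := by
          refine Finset.sum_congr rfl fun τ _ => ?_
          rw [lintegral_indicator (hBtm τ)]; simp
      _ = ∫⁻ ω, ∑ τ : Equiv.Perm E, (Bt τ).indicator (fun _ => (1 : ENNReal)) ω ∂(cubeMeasure n) := by
          rw [lintegral_finsetSum]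
          intro τ _
          exact measurable_const.indicator (hBtm τ)
      _ ≤ ∫⁻ _, ((2 ^ (2 * n - s - s) : ℕ) : ENNReal) ∂(cubeMeasure n) := lintegral_mono hpt
      _ = _ := by simp
  have hreal := ENNReal.toReal_mono (ENNReal.natCast_ne_top _) hint
  rw [ENNReal.toReal_mul, ENNReal.toReal_natCast, ENNReal.toReal_natCast] at hreal
  unfold pairProb
  rw [le_div_iff₀ (by positivity), mul_comm]
  refine hreal.trans (le_of_eq ?_)
  rw [show 2 * n - s - s = 2 * (n - s) by omega, pow_mul]
  norm_num

end RandomHypercube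

namespace RandomHypercube

/-- lists of length `r`, sum `m`, no entry one, at least `g` nonzero entries -/
def VL : ℕ → ℕ → ℕ → Finset (List ℕ)
  | g, 0, m => if m = 0 ∧ g = 0 then {[]} else ∅
  | g, r + 1, m => (VL g r m).image (List.cons 0) ∪
      (Finset.Icc 2 m).biUnion fun k => (VL (g - 1) r (m - k)).image (List.cons k)

/-- weighted count of such lists -/
def DL : ℕ → ℕ → ℕ → ℕ
  | g, 0, m => if m = 0 ∧ g = 0 then 1 else 0
  | g, r + 1, m => DL g r m + ∑ k ∈ Finset.Icc 2 m, k.factorial * DL (g - 1) r (m - k)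

lemma mem_VL (r : ℕ) : ∀ (g m : ℕ) (v : List ℕ), v.length = r → v.sum = m → 1 ∉ v →
    g ≤ (v.filter (· != 0)).length → v ∈ VL g r m := by
  induction r with
  | zero =>
    intro g m v h1 h2 h3 h4
    have hv := List.length_eq_zero_iff.1 h1
    subst hv
    simp at h2 h4
    simp [VL, ← h2, h4]
  | succ r ih =>
    intro g m v h1 h2 h3 h4
    match v, h1 with
    | x :: v, h1 =>
      simp only [List.length_cons, Nat.add_right_cancel_iff] at h1
      simp only [List.sum_cons] at h2
      simp only [List.mem_cons, not_or] at h3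
      rw [VL, Finset.mem_union]
      by_cases hx : x = 0
      · left
        subst hx
        refine Finset.mem_image_of_mem _ (ih _ _ _ h1 (by omega) h3.2 ?_)
        simpa using h4
      · right
        rw [Finset.mem_biUnion]
        refine ⟨x, by simp; omega, Finset.mem_image_of_mem _ (ih _ _ _ h1 (by omega) h3.2 ?_)⟩
        have : ((x :: v).filter (· != 0)) = x :: v.filter (· != 0) := by
          simp [hx]
        rw [this] at h4
        simp only [List.length_cons] at h4
        omega

lemma sum_VL (r : ℕ) : ∀ g m : ℕ, ∑ v ∈ VL g r m, (v.map Nat.factorial).prod = DL g r m := by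
  induction r with
  | zero =>
    intro g m
    simp only [VL, DL]
    split_ifs <;> simp
  | succ r ih =>
    intro g m
    have inj : ∀ k, Function.Injective (List.cons k : List ℕ → List ℕ) :=
      fun k a b h => (List.cons.inj h).2
    rw [VL, Finset.sum_union, Finset.sum_biUnion]
    · rw [DL, Finset.sum_image (fun a _ b _ h => inj 0 h)]
      congr 1
      · simp [ih]
      · refine Finset.sum_congr rfl fun k _ => ?_
        rw [Finset.sum_image (fun a _ b _ h => inj k h)]
        simp [← Finset.mul_sum, ih]
    · intro a _ b _ hab
      rw [Function.onFun, Finset.disjoint_left]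
      intro v hv hv'
      obtain ⟨x, _, rfl⟩ := Finset.mem_image.1 hv
      obtain ⟨y, _, hy⟩ := Finset.mem_image.1 hv'
      exact hab (List.cons.inj hy).1.symm
    · rw [Finset.disjoint_left]
      intro v hv hv'
      obtain ⟨x, _, rfl⟩ := Finset.mem_image.1 hv
      obtain ⟨k, hk, hk'⟩ := Finset.mem_biUnion.1 hv'
      obtain ⟨y, _, hy⟩ := Finset.mem_image.1 hk'
      have := (List.cons.inj hy).1
      simp at hk
      omega

/-- gaps with general start -/
def gapL (n a : ℕ) (l : List ℕ) : List ℕ :=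
  List.zipWith (fun a b => b - a) (a :: l.map (· + 1)) (l ++ [n])

lemma gapL_nil (n a : ℕ) : gapL n a [] = [n - a] := rfl
lemma gapL_cons (n a x : ℕ) (l : List ℕ) : gapL n a (x :: l) = (x - a) :: gapL n (x + 1) l := rfl

lemma gapL_length (n : ℕ) (l : List ℕ) : ∀ a, (gapL n a l).length = l.length + 1 := by
  intro a; simp [gapL]

lemma gapL_inj (n : ℕ) (l : List ℕ) : ∀ (l' : List ℕ) (a : ℕ), l.Pairwise (· < ·) → l'.Pairwise (· < ·) →
    (∀ x ∈ l, a ≤ x) → (∀ x ∈ l', a ≤ x) → gapL n a l = gapL n a l' → l = l' := by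
  induction l with
  | nil =>
    intro l' a _ _ _ _ h
    have := congrArg List.length h
    simp only [gapL_length, List.length_nil] at this
    exact (List.length_eq_zero_iff.1 (by omega)).symm
  | cons x l ih =>
    intro l' a h1 h2 h3 h4 h
    match l' with
    | [] =>
      have := congrArg List.length h
      simp only [gapL_length, List.length_nil, List.length_cons] at this
      omega
    | y :: l' =>
      rw [gapL_cons, gapL_cons] at h
      obtain ⟨e1, e2⟩ := List.cons.inj h
      have hx := h3 x (by simp)
      have hy := h4 y (by simp)
      have : x = y := by omega
      subst this
      rw [List.pairwise_cons] at h1 h2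
      rw [ih l' (x + 1) h1.2 h2.2 (fun z hz => h1.1 z hz) (fun z hz => h2.1 z hz) e2]

/-- fibres -/
def fibL (n a : ℕ) (l : List ℕ) (t : ℕ) : Finset ℕ :=
  (Finset.Ico a n).filter (fun i => i ∉ l ∧ l.countP (fun x => decide (x < i)) = t)

lemma gapL_eq (n : ℕ) (l : List ℕ) : ∀ a, l.Pairwise (· < ·) → (∀ x ∈ l, a ≤ x ∧ x < n) →
    gapL n a l = (List.range (l.length + 1)).map (fun t => (fibL n a l t).card) := by
  induction l with
  | nil =>
    intro a _ _
    rw [gapL_nil]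
    simp [fibL]
  | cons x l ih =>
    intro a h1 h2
    rw [List.pairwise_cons] at h1
    have hx := h2 x (by simp)
    rw [gapL_cons, ih (x + 1) h1.2 (fun z hz => ⟨h1.1 z hz, (h2 z (by simp [hz])).2⟩),
      List.length_cons, List.range_succ_eq_map (n := l.length + 1), List.map_cons, List.map_map]
    refine congrArg₂ List.cons ?_ ?_
    · rw [← Nat.card_Ico]
      congr 1
      ext i
      simp only [fibL, Finset.mem_Ico, Finset.mem_filter, List.mem_cons, not_or, List.countP_eq_zero,
        decide_eq_true_eq]
      constructor
      · rintro ⟨ha, hb⟩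
        refine ⟨⟨ha, by omega⟩, ⟨by omega, fun hi => ?_⟩, ?_⟩
        · have := h1.1 i hi; omega
        · rintro z (rfl | hz)
          · omega
          · have := h1.1 z hz; omega
      · rintro ⟨⟨ha, hb⟩, ⟨hc, hd⟩, he⟩
        have := he x (Or.inl rfl)
        omega
    · refine List.map_congr_left fun t _ => ?_
      simp only [Function.comp]
      congr 1
      ext i
      simp only [fibL, Finset.mem_Ico, Finset.mem_filter, List.mem_cons, not_or, List.countP_cons,
        decide_eq_true_eq]
      constructor
      · rintro ⟨⟨ha, hb⟩, hc, hd⟩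
        refine ⟨⟨by omega, hb⟩, ⟨by omega, hc⟩, ?_⟩
        rw [if_pos (by omega), hd]
      · rintro ⟨⟨ha, hb⟩, ⟨hc, hd⟩, he⟩
        have hxi : x < i := by
          by_contra hcon
          rw [if_neg hcon] at he
          have : 0 < l.countP (fun x => decide (x < i)) := by omega
          rw [List.countP_pos_iff] at this
          obtain ⟨z, hz, hzi⟩ := this
          have := h1.1 z hz
          simp at hzi
          omega
        rw [if_pos hxi] at he
        exact ⟨⟨hxi, hb⟩, hd, by omega⟩

/-- number of marked elements below -/
def cntF {n : ℕ} (S : Finset (Fin n)) (i : Fin n) : ℕ := (S.filter (· < i)).card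

/-- blocks -/
def fibF {n : ℕ} (S : Finset (Fin n)) (t : ℕ) : Finset (Fin n) :=
  Finset.univ.filter (fun i => i ∉ S ∧ cntF S i = t)

lemma cntF_mono {n : ℕ} (S : Finset (Fin n)) {i j : Fin n} (h : i ≤ j) : cntF S i ≤ cntF S j := by
  apply Finset.card_le_card
  intro k hk
  simp only [Finset.mem_filter] at hk ⊢
  exact ⟨hk.1, hk.2.trans_le h⟩

lemma cntF_lt {n : ℕ} (S : Finset (Fin n)) (i : Fin n) : cntF S i < S.card + 1 :=
  Nat.lt_succ_of_le (Finset.card_filter_le _ _)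

lemma sort_pairwise {n : ℕ} (S : Finset (Fin n)) :
    ((S.sort (· ≤ ·)).map Fin.val).Pairwise (· < ·) := by
  rw [List.pairwise_map]
  exact (Finset.sortedLT_sort S).pairwise

lemma gapsOfList_sort {n : ℕ} (S : Finset (Fin n)) :
    gapsOfList n ((S.sort (· ≤ ·)).map Fin.val) =
      (List.range (S.card + 1)).map (fun t => (fibF S t).card) := by
  have h := gapL_eq n ((S.sort (· ≤ ·)).map Fin.val) 0 (sort_pairwise S) (by simp)
  change gapL n 0 _ = _
  rw [h]
  simp only [List.length_map, Finset.length_sort]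
  refine List.map_congr_left fun t _ => ?_
  rw [← Finset.card_map Fin.valEmbedding]
  congr 1
  ext i
  have hc : ∀ j : Fin n, ((S.sort (· ≤ ·)).map Fin.val).countP (fun x => decide (x < (j : ℕ)))
      = cntF S j := by
    intro j
    have hco : ((fun x => decide (x < (j : ℕ))) ∘ Fin.val) = fun b : Fin n => decide (b < j) := by
      funext b; simp
    rw [List.countP_map, hco, ← Multiset.coe_countP, Finset.sort_eq, Multiset.countP_eq_card_filter]
    unfold cntF
    rw [Finset.card_def, Finset.filter_val]
  simp only [fibL, fibF, Finset.mem_filter, Finset.mem_map, Finset.mem_univ, true_and]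
  constructor
  · rintro ⟨h1, h2, h3⟩
    simp only [Finset.mem_Ico] at h1
    refine ⟨⟨i, h1.2⟩, ⟨fun hm => h2 ?_, ?_⟩, rfl⟩
    · exact List.mem_map.2 ⟨⟨i, h1.2⟩, by simpa using hm, rfl⟩
    · rw [← hc]; exact h3
  · rintro ⟨j, ⟨h1, h2⟩, rfl⟩
    refine ⟨by simp, ?_, ?_⟩
    · intro hm
      obtain ⟨k, hk, hk'⟩ := List.mem_map.1 hm
      have : k = j := Fin.ext hk'
      subst this
      exact h1 (by simpa using hk)
    · exact (hc j).trans h2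

/-- relative permutation -/
def relP {n : ℕ} (σ σ' : Equiv.Perm (Fin n)) : Equiv.Perm (Fin n) := σ'.trans σ.symm

lemma shared_fix {n : ℕ} {σ σ' : Equiv.Perm (Fin n)} {j : Fin n} (h : j ∈ sharedSteps n σ σ') :
    relP σ σ' j = j := by
  simp only [sharedSteps, Finset.mem_filter, Finset.mem_univ, true_and, pathEdge, Prod.mk.injEq] at h
  simp [relP, ← h.2]

lemma shared_lt {n : ℕ} {σ σ' : Equiv.Perm (Fin n)} {j : Fin n} (h : j ∈ sharedSteps n σ σ')
    (i : Fin n) : i < j ↔ relP σ σ' i < j := by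
  simp only [sharedSteps, Finset.mem_filter, Finset.mem_univ, true_and, pathEdge, Prod.mk.injEq] at h
  have h1 : ∀ (τ : Equiv.Perm (Fin n)) x, x ∈ initSeg n τ j ↔ τ.symm x < j := by
    intro τ x
    simp only [initSeg, Finset.mem_image, Finset.mem_filter, Finset.mem_univ, true_and]
    constructor
    · rintro ⟨a, ha, rfl⟩; simpa using ha
    · intro hx; exact ⟨_, hx, by simp⟩
  have := h1 σ (σ' i)
  rw [h.1, h1 σ' (σ' i)] at this
  simpa [relP] using this

lemma rel_notmem {n : ℕ} {σ σ' : Equiv.Perm (Fin n)} {i : Fin n} (h : i ∉ sharedSteps n σ σ') :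
    relP σ σ' i ∉ sharedSteps n σ σ' := by
  intro hm
  have := shared_fix hm
  have := (relP σ σ').injective this
  rw [this] at hm
  exact h hm

lemma rel_cnt {n : ℕ} {σ σ' : Equiv.Perm (Fin n)} {i : Fin n} (h : i ∉ sharedSteps n σ σ') :
    cntF (sharedSteps n σ σ') (relP σ σ' i) = cntF (sharedSteps n σ σ') i := by
  unfold cntF
  congr 1
  apply Finset.filter_congr
  intro j hj
  have h1 := shared_lt hj i
  have h2 : i ≠ j := fun e => h (e ▸ hj)
  have h3 : relP σ σ' i ≠ j := fun e => rel_notmem h (e ▸ hj)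
  constructor
  · intro hlt
    rcases lt_trichotomy i j with h4 | h4 | h4
    · exact absurd (h1.1 h4) (not_lt.2 hlt.le)
    · exact absurd h4 h2
    · exact h4
  · intro hlt
    rcases lt_trichotomy (relP σ σ' i) j with h4 | h4 | h4
    · exact absurd (h1.2 h4) (not_lt.2 hlt.le)
    · exact absurd h4 h3
    · exact h4

lemma fib_ne_one {n : ℕ} (σ σ' : Equiv.Perm (Fin n)) (t : ℕ) :
    (fibF (sharedSteps n σ σ') t).card ≠ 1 := by
  intro h
  obtain ⟨i0, hi0⟩ := Finset.card_eq_one.1 h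
  have hm : ∀ i, (i ∉ sharedSteps n σ σ' ∧ cntF (sharedSteps n σ σ') i = t) ↔ i = i0 := by
    intro i
    have : i ∈ fibF (sharedSteps n σ σ') t ↔ i = i0 := by rw [hi0]; simp
    simpa [fibF] using this
  obtain ⟨h1, h2⟩ := (hm i0).2 rfl
  have h3 : relP σ σ' i0 = i0 := (hm _).1 ⟨rel_notmem h1, by rw [rel_cnt h1, h2]⟩
  apply h1
  have e1 : σ' i0 = σ i0 := by
    have := congrArg σ h3
    simpa [relP] using this
  have e2 : ∀ i < i0, relP σ σ' i < i0 := by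
    intro i hi
    by_cases his : i ∈ sharedSteps n σ σ'
    · rw [shared_fix his]; exact hi
    · have c1 := cntF_mono (sharedSteps n σ σ') hi.le
      have c2 : cntF (sharedSteps n σ σ') i ≠ t := fun hc => hi.ne ((hm i).1 ⟨his, hc⟩)
      by_contra hcon
      have c3 := cntF_mono (sharedSteps n σ σ') (not_lt.1 hcon)
      rw [rel_cnt his] at c3
      omega
  have e3 : initSeg n σ' i0 = initSeg n σ i0 := by
    apply Finset.eq_of_subset_of_card_le
    · intro x hx
      simp only [initSeg, Finset.mem_image, Finset.mem_filter, Finset.mem_univ, true_and] at hx ⊢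
      obtain ⟨i, hi, rfl⟩ := hx
      exact ⟨relP σ σ' i, e2 i hi, by simp [relP]⟩
    · rw [card_initSeg, card_initSeg]
  simp [sharedSteps, pathEdge, e1, e3]

lemma count_S {n : ℕ} (σ : Equiv.Perm (Fin n)) (S : Finset (Fin n)) :
    (Finset.univ.filter fun σ' => sharedSteps n σ σ' = S).card ≤
      ∏ t : Fin (S.card + 1), (fibF S t).card.factorial := by
  classical
  let f : Fin n → Fin n ⊕ Fin (S.card + 1) := fun i =>
    if i ∈ S then Sum.inl i else Sum.inr ⟨cntF S i, cntF_lt S i⟩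
  have h1 : (Finset.univ.filter fun σ' => sharedSteps n σ σ' = S).card ≤
      Fintype.card {g : Equiv.Perm (Fin n) // f ∘ g = f} := by
    rw [Fintype.card_subtype]
    refine Finset.card_le_card_of_injOn (fun σ' => relP σ σ') ?_ ?_
    · intro σ' h
      simp only [Finset.coe_filter, Finset.mem_univ, true_and, Set.mem_ofPred_eq] at h ⊢
      subst h
      funext i
      simp only [Function.comp, f]
      by_cases hi : i ∈ sharedSteps n σ σ'
      · rw [shared_fix hi]
      · rw [if_neg hi, if_neg (rel_notmem hi)]
        simp only [rel_cnt hi]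
    · intro a _ b _ hab
      ext i
      have := congrArg (fun g : Equiv.Perm (Fin n) => σ (g i)) hab
      simp [relP] at this
      rw [this]
  refine h1.trans (le_of_eq ?_)
  rw [DomMulAct.stabilizer_card, Fintype.prod_sum_type]
  have h2 : ∀ i : Fin n, (Fintype.card {a // f a = Sum.inl i}).factorial = 1 := by
    intro i
    rw [Nat.factorial_eq_one, Fintype.card_le_one_iff]
    rintro ⟨a, ha⟩ ⟨b, hb⟩
    simp only [f] at ha hb
    split_ifs at ha hb
    simp only [Sum.inl.injEq] at ha hb
    subst ha; subst hb; rfl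
  have h3 : ∀ t, Fintype.card {a // f a = Sum.inr t} = (fibF S t).card := by
    intro t
    rw [Fintype.card_subtype]
    congr 1
    ext a
    simp only [fibF, Finset.mem_filter, Finset.mem_univ, true_and, f]
    split_ifs with h
    · simp [h]
    · simp [h, Fin.ext_iff]
  simp [h2, h3]

lemma count_le {n : ℕ} (σ : Equiv.Perm (Fin n)) (s : ℕ) :
    (Finset.univ.filter fun σ' => (sharedSteps n σ σ').card = s ∧ 2 ≤ numGaps n σ σ').card ≤
      DL 2 (s + 1) (n - s) := by
  classical
  rw [← sum_VL, Finset.card_eq_sum_card_fiberwise (f := fun σ' => gapVector n σ σ')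
    (t := VL 2 (s + 1) (n - s))]
  · refine Finset.sum_le_sum fun v hv => ?_
    rcases Finset.eq_empty_or_nonempty (Finset.filter (fun σ' => gapVector n σ σ' = v)
      (Finset.univ.filter fun σ' => (sharedSteps n σ σ').card = s ∧ 2 ≤ numGaps n σ σ')) with
      h0 | ⟨σ0, h0⟩
    · rw [h0]; simp
    simp only [Finset.mem_filter, Finset.mem_univ, true_and] at h0
    have hv0 := h0.2
    have hwt : (v.map Nat.factorial).prod =
        ∏ t : Fin ((sharedSteps n σ σ0).card + 1), (fibF (sharedSteps n σ σ0) t).card.factorial := by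
      rw [← hv0, gapVector, gapsOfList_sort, List.map_map]
      rw [Fin.prod_univ_eq_prod_range (fun t => (fibF (sharedSteps n σ σ0) t).card.factorial)]
      rfl
    rw [hwt]
    refine le_trans (Finset.card_le_card ?_) (count_S σ (sharedSteps n σ σ0))
    intro σ1 h1
    simp only [Finset.mem_filter, Finset.mem_univ, true_and] at h1 ⊢
    have he : gapVector n σ σ1 = gapVector n σ σ0 := by rw [h1.2, hv0]
    have := gapL_inj n _ _ 0 (sort_pairwise _) (sort_pairwise _) (by simp) (by simp) he
    have := (List.map_injective_iff.2 Fin.val_injective) this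
    rw [← Finset.sort_toFinset (sharedSteps n σ σ1) (· ≤ ·), this, Finset.sort_toFinset]
  · intro σ' h
    simp only [Finset.coe_filter, Finset.mem_univ, true_and, Set.mem_ofPred_eq] at h
    obtain ⟨h1, h2⟩ := h
    change gapVector n σ σ' ∈ VL 2 (s + 1) (n - s)
    refine mem_VL _ _ _ _ ?_ ?_ ?_ h2
    · rw [gapVector, gapsOfList_sort]; simp [h1]
    · rw [gapVector, gapsOfList_sort, h1]
      have e1 : ((List.range (s + 1)).map (fun t => (fibF (sharedSteps n σ σ') t).card)).sum =
        ∑ t ∈ Finset.range (s + 1), (fibF (sharedSteps n σ σ') t).card := rfl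
      rw [e1]
      have e2 := Finset.card_eq_sum_card_fiberwise (f := fun i => cntF (sharedSteps n σ σ') i)
        (s := (sharedSteps n σ σ')ᶜ) (t := Finset.range (s + 1)) (by
          intro i _
          have := cntF_lt (sharedSteps n σ σ') i
          rw [h1] at this
          simpa using this)
      rw [Finset.card_compl, Fintype.card_fin, h1] at e2
      rw [e2]
      refine Finset.sum_congr rfl fun t _ => ?_
      congr 1
      ext i
      simp [fibF]
    · rw [gapVector, gapsOfList_sort]
      intro hm
      obtain ⟨t, _, ht⟩ := List.mem_map.1 hm
      exact fib_ne_one σ σ' t ht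

end RandomHypercube

namespace RandomHypercube

/-- auxiliary bound sequence -/
def QL (N : ℕ) : ℕ → ℕ
  | 0 => 0
  | 1 => 0
  | M + 2 => (M + 2).factorial + 10 * N * QL N M

lemma fact_conv_aux (a b : ℕ) :
    (a + 3).factorial * (b + 3).factorial ≤ 6 * (a + b + 3).factorial := by
  induction a with
  | zero => simp [Nat.factorial]
  | succ a ih =>
    rw [show a + 1 + 3 = (a + 3) + 1 by ring, Nat.factorial_succ (a + 3),
      show a + 1 + b + 3 = (a + b + 3) + 1 by ring, Nat.factorial_succ (a + b + 3)]
    calc (a + 3 + 1) * (a + 3).factorial * (b + 3).factorial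
        = (a + 3 + 1) * ((a + 3).factorial * (b + 3).factorial) := by ring
      _ ≤ (a + b + 3 + 1) * (6 * (a + b + 3).factorial) :=
          Nat.mul_le_mul (by omega) ih
      _ = _ := by ring

lemma fact_conv (M : ℕ) :
    ∑ k ∈ Finset.Icc 2 (M + 2), k.factorial * (M + 4 - k).factorial ≤ 10 * (M + 2).factorial := by
  have h : ∀ k ∈ Finset.Icc 2 (M + 2), k.factorial * (M + 4 - k).factorial ≤
      6 * (M + 1).factorial + (if k = 2 then 2 * (M + 2).factorial else 0) +
      (if k = M + 2 then 2 * (M + 2).factorial else 0) := by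
    intro k hk
    rw [Finset.mem_Icc] at hk
    by_cases h1 : k = 2
    · subst h1
      rw [show M + 4 - 2 = M + 2 by omega]
      simp only [if_true, Nat.factorial_two]
      omega
    by_cases h2 : k = M + 2
    · subst h2
      rw [show M + 4 - (M + 2) = 2 by omega]
      simp only [if_true, Nat.factorial_two]
      omega
    obtain ⟨a, rfl⟩ : ∃ a, k = a + 3 := ⟨k - 3, by omega⟩
    obtain ⟨b, hb⟩ : ∃ b, M + 4 - (a + 3) = b + 3 := ⟨M + 4 - (a + 3) - 3, by omega⟩
    rw [hb]
    have := fact_conv_aux a b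
    rw [show a + b + 3 = M + 1 by omega] at this
    omega
  refine (Finset.sum_le_sum h).trans ?_
  rw [Finset.sum_add_distrib, Finset.sum_add_distrib, Finset.sum_const, Finset.sum_ite_eq',
    Finset.sum_ite_eq']
  simp only [Nat.card_Icc, smul_eq_mul, Finset.mem_Icc]
  rw [if_pos (by omega), if_pos (by omega), show M + 2 + 1 - 2 = M + 1 by omega,
    Nat.factorial_succ (M + 1)]
  nlinarith [Nat.factorial_pos (M + 1)]

lemma QL_conv (N : ℕ) : ∀ m, ∑ k ∈ Finset.Icc 2 m, k.factorial * QL N (m - k) ≤ 10 * QL N (m - 2)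
  | 0 => by simp
  | 1 => by simp
  | 2 => by simp [QL]
  | 3 => by
    rw [show Finset.Icc 2 3 = {2, 3} by decide]
    simp [QL]
  | m + 4 => by
    have ih := QL_conv N (m + 2)
    have e1 : ∑ k ∈ Finset.Icc 2 (m + 4), k.factorial * QL N (m + 4 - k) =
        ∑ k ∈ Finset.Icc 2 (m + 2), k.factorial * QL N (m + 4 - k) := by
      rw [Finset.sum_Icc_succ_top (by omega), Finset.sum_Icc_succ_top (by omega)]
      rw [show m + 3 + 1 - (m + 3 + 1) = 0 by omega, show m + 3 + 1 - (m + 2 + 1) = 1 by omega]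
      simp [QL]
    have e2 : ∀ k ∈ Finset.Icc 2 (m + 2), k.factorial * QL N (m + 4 - k) =
        k.factorial * (m + 4 - k).factorial + 10 * N * (k.factorial * QL N (m + 2 - k)) := by
      intro k hk
      rw [Finset.mem_Icc] at hk
      rw [show m + 4 - k = (m + 2 - k) + 2 by omega, QL]
      ring
    rw [e1, Finset.sum_congr rfl e2, Finset.sum_add_distrib, ← Finset.mul_sum,
      show m + 4 - 2 = m + 2 by omega, QL]
    rw [show m + 2 - 2 = m by omega] at ih
    have := fact_conv m
    nlinarith [Nat.mul_le_mul_left (10 * N) ih]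

lemma DL_zero (r : ℕ) : ∀ m, DL 0 r m = DL 1 r m + if m = 0 then 1 else 0 := by
  induction r with
  | zero => intro m; simp [DL]
  | succ r ih =>
    intro m
    rw [DL, DL, ih m]
    simp only [Nat.zero_sub, Nat.sub_self]
    ring

lemma DL_one (N r : ℕ) (hr : r ≤ N) : ∀ m, DL 1 r m ≤ r * QL N m := by
  induction r with
  | zero => intro m; simp [DL]
  | succ r ih =>
    intro m
    have ih := ih (by omega)
    rw [DL]
    simp only [Nat.sub_self]
    match m with
    | 0 => have := ih 0; simp [QL] at this ⊢; exact this
    | 1 => have := ih 1; simp [QL] at this ⊢; exact this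
    | m + 2 =>
      have e : ∑ k ∈ Finset.Icc 2 (m + 2), k.factorial * DL 0 r (m + 2 - k) ≤
          r * ∑ k ∈ Finset.Icc 2 (m + 2), k.factorial * QL N (m + 2 - k) + (m + 2).factorial := by
        calc ∑ k ∈ Finset.Icc 2 (m + 2), k.factorial * DL 0 r (m + 2 - k)
            ≤ ∑ k ∈ Finset.Icc 2 (m + 2), (r * (k.factorial * QL N (m + 2 - k)) +
              if k = m + 2 then (m + 2).factorial else 0) := by
              refine Finset.sum_le_sum fun k hk => ?_
              rw [Finset.mem_Icc] at hk
              rw [DL_zero]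
              have := Nat.mul_le_mul_left k.factorial (ih (m + 2 - k))
              by_cases hkm : k = m + 2
              · subst hkm
                simp only [Nat.sub_self, if_true] at this ⊢
                nlinarith
              · rw [if_neg (by omega), if_neg hkm]
                nlinarith
          _ = _ := by
              rw [Finset.sum_add_distrib, ← Finset.mul_sum, Finset.sum_ite_eq']
              simp
      have h2 := QL_conv N (m + 2)
      rw [show m + 2 - 2 = m by omega] at h2
      have h3 := ih (m + 2)
      have h4 : r * ∑ k ∈ Finset.Icc 2 (m + 2), k.factorial * QL N (m + 2 - k) ≤ N * (10 * QL N m) :=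
        Nat.mul_le_mul (by omega) h2
      have h5 : QL N (m + 2) = (m + 2).factorial + 10 * N * QL N m := by rw [QL]
      calc _ ≤ r * QL N (m + 2) + (N * (10 * QL N m) + (m + 2).factorial) := by omega
        _ = r * QL N (m + 2) + QL N (m + 2) := by rw [h5]; ring
        _ = _ := by ring

lemma DL_two (N r : ℕ) (hr : r ≤ N) : ∀ m, DL 2 r m ≤ 10 * r ^ 2 * QL N (m - 2) := by
  induction r with
  | zero => intro m; simp [DL]
  | succ r ih =>
    intro m
    have ih := ih (by omega) m
    rw [DL]
    simp only [Nat.add_one_sub_one]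
    have e : ∑ k ∈ Finset.Icc 2 m, k.factorial * DL 1 r (m - k) ≤
        r * ∑ k ∈ Finset.Icc 2 m, k.factorial * QL N (m - k) := by
      rw [Finset.mul_sum]
      refine Finset.sum_le_sum fun k _ => ?_
      have := Nat.mul_le_mul_left k.factorial (DL_one N r (by omega) (m - k))
      nlinarith
    have h2 := Nat.mul_le_mul_left r (QL_conv N m)
    nlinarith [Nat.zero_le (r * QL N (m - 2)), Nat.zero_le (QL N (m - 2))]

/-- normalized weight of one gap -/
noncomputable def psi (n M : ℕ) : ℝ := 4 ^ M * M.factorial * n.factorial / (n + M).factorial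

lemma psi_nonneg (n M : ℕ) : 0 ≤ psi n M := by unfold psi; positivity

lemma psi_succ (n M : ℕ) : psi n (M + 1) * (n + M + 1) = psi n M * (4 * (M + 1)) := by
  unfold psi
  rw [← add_assoc, Nat.factorial_succ (n + M), Nat.factorial_succ M]
  push_cast
  field_simp
  ring

lemma psi_top (n : ℕ) (hn : 0 < n) : psi n n ≤ 2 * n := by
  unfold psi
  rw [div_le_iff₀ (by positivity)]
  have h1 := Nat.four_pow_le_two_mul_self_mul_centralBinom n hn
  have h2 := Nat.add_choose_mul_factorial_mul_factorial n n
  rw [Nat.centralBinom_eq_two_mul_choose, two_mul n] at h1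
  have h3 : 4 ^ n * n.factorial * n.factorial ≤ 2 * n * (n + n).factorial := by
    rw [← h2]
    calc 4 ^ n * n.factorial * n.factorial = 4 ^ n * (n.factorial * n.factorial) := by ring
      _ ≤ ((n + n) * (n + n).choose n) * (n.factorial * n.factorial) := Nat.mul_le_mul_right _ h1
      _ = _ := by ring
  exact_mod_cast h3

lemma psi_high (n : ℕ) (hn : 0 < n) (d : ℕ) (hd : 2 * d ≤ n) :
    psi n (n - d) ≤ 2 * n * (3 / 4) ^ d := by
  induction d with
  | zero => simpa using psi_top n hn
  | succ d ih =>
    have ih := ih (by omega)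
    obtain ⟨M, hM⟩ : ∃ M, n = M + d + 1 := ⟨n - d - 1, by omega⟩
    rw [show n - d = M + 1 by omega] at ih
    rw [show n - (d + 1) = M by omega]
    have h1 := psi_succ n M
    have h2 := psi_nonneg n M
    have h3 : (n : ℝ) ≤ 2 * (M + 1) := by
      have : n ≤ 2 * (M + 1) := by omega
      exact_mod_cast this
    have h4 : psi n M ≤ 3 / 4 * psi n (M + 1) := by
      have hp : (0 : ℝ) < n + M + 1 := by positivity
      have : psi n (M + 1) = psi n M * (4 * (M + 1)) / (n + M + 1) := by
        rw [eq_div_iff hp.ne', h1]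
      rw [this, ← mul_div_assoc, le_div_iff₀ hp]
      nlinarith
    rw [pow_succ]
    linarith

lemma psi_dec (n M : ℕ) (h2 : 2 ≤ M) (hM : 3 * M ≤ n) : psi n M ≤ psi n 2 := by
  induction M, h2 using Nat.le_induction with
  | base => exact le_rfl
  | succ M h2 ih =>
    refine le_trans ?_ (ih (by omega))
    have h1 := psi_succ n M
    have hp : (0 : ℝ) < n + M + 1 := by positivity
    have h3 : (3 : ℝ) * (M + 1) ≤ n := by exact_mod_cast hM
    have : psi n (M + 1) = psi n M * (4 * (M + 1)) / (n + M + 1) := by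
      rw [eq_div_iff hp.ne', h1]
    rw [this, div_le_iff₀ hp]
    exact mul_le_mul_of_nonneg_left (by linarith) (psi_nonneg n M)

lemma psi_inc (n M M' : ℕ) (h : M ≤ M') (hM : n ≤ 3 * (M + 1)) : psi n M ≤ psi n M' := by
  induction M', h using Nat.le_induction with
  | base => exact le_rfl
  | succ K hK ih =>
    refine ih.trans ?_
    have h1 := psi_succ n K
    have hp : (0 : ℝ) < n + K + 1 := by positivity
    have h3 : (n : ℝ) ≤ 3 * (K + 1) := by
      have : n ≤ 3 * (K + 1) := by omega
      exact_mod_cast this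
    have : psi n (K + 1) = psi n K * (4 * (K + 1)) / (n + K + 1) := by
      rw [eq_div_iff hp.ne', h1]
    rw [this, le_div_iff₀ hp]
    exact mul_le_mul_of_nonneg_left (by linarith) (psi_nonneg n K)

lemma psi_two (n : ℕ) (hn : 0 < n) : psi n 2 ≤ 32 / n ^ 2 := by
  unfold psi
  rw [div_le_div_iff₀ (by positivity) (by positivity), Nat.factorial_succ (n + 1),
    Nat.factorial_succ n]
  have : (0 : ℝ) < n.factorial := by positivity
  have hn' : (0 : ℝ) < n := by positivity
  simp only [Nat.factorial_two]
  push_cast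
  have h : (n : ℝ) ^ 2 ≤ (n + 1 + 1) * (n + 1) := by nlinarith
  nlinarith [mul_le_mul_of_nonneg_left h this.le]

lemma psi_bound (n s M : ℕ) (hn : 0 < n) (h2 : 2 ≤ M) (hM : M + s ≤ n) :
    psi n M ≤ 32 / n ^ 2 + 2 * n * (3 / 4) ^ (s / 2) := by
  have p1 : (0 : ℝ) ≤ 32 / n ^ 2 := by positivity
  have p2 : (0 : ℝ) ≤ 2 * n * (3 / 4) ^ (s / 2) := by positivity
  have hpow : ∀ d, s / 2 ≤ d → (2 * n * (3 / 4) ^ d : ℝ) ≤ 2 * n * (3 / 4) ^ (s / 2) := by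
    intro d hd
    refine mul_le_mul_of_nonneg_left ?_ (by positivity)
    exact pow_le_pow_of_le_one (by norm_num) (by norm_num) hd
  by_cases h3 : 3 * M ≤ n
  · have := (psi_dec n M h2 h3).trans (psi_two n hn)
    linarith
  by_cases h4 : n ≤ 2 * M
  · have := psi_high n hn (n - M) (by omega)
    rw [show n - (n - M) = M by omega] at this
    have := this.trans (hpow _ (by omega))
    linarith
  · have h5 := psi_inc n M (n - n / 2) (by omega) (by omega)
    have h6 := psi_high n hn (n / 2) (by omega)
    have := h6.trans (hpow _ (by omega))
    linarith

lemma fact_ratio (n M : ℕ) : (n : ℝ) ^ 2 * (n + M).factorial ≤ (n + (M + 2)).factorial := by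
  have : n ^ 2 * (n + M).factorial ≤ (n + (M + 2)).factorial := by
    rw [show n + (M + 2) = n + M + 1 + 1 by ring, Nat.factorial_succ, Nat.factorial_succ, ← mul_assoc]
    refine Nat.mul_le_mul_right _ ?_
    nlinarith
  exact_mod_cast this

lemma R_bound (n : ℕ) (hn : 320 ≤ n) (b : ℝ) (hb : 0 ≤ b) : ∀ M : ℕ,
    (∀ K, 2 ≤ K → K ≤ M → psi n K ≤ b) →
    (4 : ℝ) ^ M * QL n M * n.factorial / (n + M).factorial ≤ 2 * b
  | 0, _ => by simp [QL]; exact hb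
  | 1, _ => by simp [QL]; exact hb
  | M + 2, h => by
    have ih := R_bound n hn b hb M (fun K h1 h2 => h K h1 (by omega))
    have h1 := h (M + 2) (by omega) le_rfl
    have hn' : (320 : ℝ) ≤ n := by exact_mod_cast hn
    have e : (4 : ℝ) ^ (M + 2) * QL n (M + 2) * n.factorial / (n + (M + 2)).factorial =
        psi n (M + 2) + 160 * n * (4 ^ M * QL n M * n.factorial) / (n + (M + 2)).factorial := by
      rw [psi, QL, ← add_div]
      push_cast
      ring
    rw [e]
    have h2 : 160 * n * (4 ^ M * QL n M * n.factorial) / ((n + (M + 2)).factorial : ℝ) ≤ b := by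
      rw [div_le_iff₀ (by positivity)] at ih ⊢
      have h3 := fact_ratio n M
      calc 160 * n * (4 ^ M * QL n M * n.factorial) ≤ 160 * n * (2 * b * (n + M).factorial) :=
            mul_le_mul_of_nonneg_left ih (by positivity)
        _ = b * (320 * n * (n + M).factorial) := by ring
        _ ≤ b * (n ^ 2 * (n + M).factorial) := by
            refine mul_le_mul_of_nonneg_left ?_ hb
            refine mul_le_mul_of_nonneg_right ?_ (by positivity)
            nlinarith
        _ ≤ _ := mul_le_mul_of_nonneg_left h3 hb
    linarith

lemma term_bound (n s : ℕ) (hn : 320 ≤ n) (hs : s + 2 ≤ n) :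
    (n.factorial : ℝ) * DL 2 (s + 1) (n - s) * (4 ^ (n - s) / (2 * n - s).factorial) ≤
      320 * (s + 1) ^ 2 / n ^ 2 * (32 / n ^ 2 + 2 * n * (3 / 4) ^ (s / 2)) := by
  set b : ℝ := 32 / n ^ 2 + 2 * n * (3 / 4) ^ (s / 2) with hb
  have hb0 : 0 ≤ b := by positivity
  obtain ⟨M, rfl⟩ : ∃ M, n = s + (M + 2) := ⟨n - s - 2, by omega⟩
  set n := s + (M + 2) with hnd
  have hR := R_bound n hn b hb0 M (fun K h1 h2 => psi_bound n s K (by omega) h1 (by omega))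
  have hn' : (0 : ℝ) < n := by
    have : 0 < n := by omega
    exact_mod_cast this
  rw [show n - s = M + 2 by omega, show 2 * n - s = n + (M + 2) by omega]
  have hD : (DL 2 (s + 1) (M + 2) : ℝ) ≤ 10 * (s + 1) ^ 2 * QL n M := by
    have := DL_two n (s + 1) (by omega) (M + 2)
    rw [show M + 2 - 2 = M by omega] at this
    exact_mod_cast this
  have h3 := fact_ratio n M
  rw [div_le_iff₀ (by positivity)] at hR
  rw [← mul_div_assoc, div_le_iff₀ (by positivity)]
  calc (n.factorial : ℝ) * DL 2 (s + 1) (M + 2) * 4 ^ (M + 2)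
      ≤ n.factorial * (10 * (s + 1) ^ 2 * QL n M) * 4 ^ (M + 2) := by gcongr
    _ = 160 * (s + 1) ^ 2 * (4 ^ M * QL n M * n.factorial) := by ring
    _ ≤ 160 * (s + 1) ^ 2 * (2 * b * (n + M).factorial) := by gcongr
    _ = 320 * (s + 1) ^ 2 / n ^ 2 * b * (n ^ 2 * (n + M).factorial) := by
        field_simp
        ring
    _ ≤ _ := by gcongr

lemma c_sum_le (n s : ℕ) (G : Finset ℕ) (hG : ∀ g ∈ G, 2 ≤ g) :
    ∑ g ∈ G, c n s g ≤
      (n.factorial : ℝ) * DL 2 (s + 1) (n - s) * (4 ^ (n - s) / (2 * n - s).factorial) := by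
  classical
  unfold c
  rw [← Finset.sum_biUnion]
  · have hnn : ∀ σ σ', 0 ≤ pairProb n σ σ' := fun σ σ' => ENNReal.toReal_nonneg
    set a : ℝ := 4 ^ (n - s) / (2 * n - s).factorial with ha
    have ha0 : 0 ≤ a := by positivity
    calc _ ≤ ∑ p ∈ Finset.univ.filter (fun p : Equiv.Perm (Fin n) × Equiv.Perm (Fin n) =>
            (sharedSteps n p.1 p.2).card = s ∧ 2 ≤ numGaps n p.1 p.2), pairProb n p.1 p.2 := by
          refine Finset.sum_le_sum_of_subset_of_nonneg ?_ (fun p _ _ => hnn _ _)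
          intro p hp
          simp only [Finset.mem_biUnion, Finset.mem_filter, Finset.mem_univ, true_and] at hp ⊢
          obtain ⟨g, hg, h1, h2⟩ := hp
          exact ⟨h1, h2 ▸ hG g hg⟩
      _ ≤ ∑ p ∈ Finset.univ.filter (fun p : Equiv.Perm (Fin n) × Equiv.Perm (Fin n) =>
            (sharedSteps n p.1 p.2).card = s ∧ 2 ≤ numGaps n p.1 p.2), a := by
          refine Finset.sum_le_sum fun p hp => ?_
          have h1 := (Finset.mem_filter.1 hp).2.1
          have := pairProb_le n p.1 p.2
          rw [h1] at this
          exact this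
      _ = ∑ σ : Equiv.Perm (Fin n), ((Finset.univ.filter fun σ' : Equiv.Perm (Fin n) =>
            (sharedSteps n σ σ').card = s ∧ 2 ≤ numGaps n σ σ').card : ℝ) * a := by
          rw [Finset.sum_filter, Fintype.sum_prod_type]
          refine Finset.sum_congr rfl fun σ _ => ?_
          rw [← Finset.sum_filter, Finset.sum_const, nsmul_eq_mul]
      _ ≤ ∑ σ : Equiv.Perm (Fin n), (DL 2 (s + 1) (n - s) : ℝ) * a := by
          refine Finset.sum_le_sum fun σ _ => ?_
          refine mul_le_mul_of_nonneg_right ?_ ha0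
          exact_mod_cast count_le σ s
      _ = _ := by
          rw [Finset.sum_const, Finset.card_univ, Fintype.card_perm, Fintype.card_fin, nsmul_eq_mul]
          ring
  · intro g _ g' _ hgg
    rw [Function.onFun, Finset.disjoint_left]
    intro p hp hp'
    exact hgg ((Finset.mem_filter.1 hp).2.2.symm.trans (Finset.mem_filter.1 hp').2.2)

lemma c_nonneg (n s g : ℕ) : 0 ≤ c n s g :=
  Finset.sum_nonneg fun _ _ => ENNReal.toReal_nonneg

lemma pow_half_le (s : ℕ) : ((3 : ℝ) / 4) ^ (s / 2) ≤ 2 * (7 / 8) ^ (s + 1) := by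
  have h1 : ((3 : ℝ) / 4) ^ (s / 2) ≤ ((7 / 8) ^ 2) ^ (s / 2) :=
    pow_le_pow_left₀ (by norm_num) (by norm_num) _
  rw [← pow_mul] at h1
  have h2 : ((7 : ℝ) / 8) ^ (2 * (s / 2) + 2) ≤ (7 / 8) ^ (s + 1) :=
    pow_le_pow_of_le_one (by norm_num) (by norm_num) (by omega)
  rw [pow_add] at h2
  have h3 : (0 : ℝ) < (7 / 8) ^ (2 * (s / 2)) := by positivity
  nlinarith

lemma total_bound : ∃ C : ℝ, ∀ n : ℕ, 320 ≤ n →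
    ∑ s ∈ Finset.Icc 1 (n - 2),
      ∑ g ∈ Finset.Icc 2 (min (s + 1) ((n - s) / 2)), c n s g ≤ C / n := by
  have hsum : Summable (fun s : ℕ => ((s + 1 : ℕ) : ℝ) ^ 2 * (7 / 8 : ℝ) ^ (s + 1)) :=
    (summable_nat_add_iff 1).2
      (summable_pow_mul_geometric_of_norm_lt_one 2 (r := (7 / 8 : ℝ)) (by norm_num))
  set K := ∑' s : ℕ, ((s + 1 : ℕ) : ℝ) ^ 2 * (7 / 8 : ℝ) ^ (s + 1) with hK
  refine ⟨10240 + 1280 * K, fun n hn => ?_⟩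
  have hn' : (0 : ℝ) < n := by
    have : 0 < n := by omega
    exact_mod_cast this
  calc _ ≤ ∑ s ∈ Finset.Icc 1 (n - 2), (10240 / (n : ℝ) ^ 2 +
          1280 / n * (((s + 1 : ℕ) : ℝ) ^ 2 * (7 / 8 : ℝ) ^ (s + 1))) := by
        refine Finset.sum_le_sum fun s hs => ?_
        rw [Finset.mem_Icc] at hs
        refine (c_sum_le n s _ (fun g hg => (Finset.mem_Icc.1 hg).1)).trans ?_
        refine (term_bound n s hn (by omega)).trans ?_
        have h1 : ((s : ℝ) + 1) ≤ n := by
          have : s + 1 ≤ n := by omega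
          exact_mod_cast this
        have h2 := pow_half_le s
        push_cast
        calc 320 * ((s : ℝ) + 1) ^ 2 / n ^ 2 * (32 / n ^ 2 + 2 * n * (3 / 4) ^ (s / 2))
            = 320 * ((s : ℝ) + 1) ^ 2 / n ^ 2 * (32 / n ^ 2) +
              640 * ((s : ℝ) + 1) ^ 2 / n * (3 / 4) ^ (s / 2) := by
              field_simp
              ring
          _ ≤ 320 * (n : ℝ) ^ 2 / n ^ 2 * (32 / n ^ 2) +
              640 * ((s : ℝ) + 1) ^ 2 / n * (2 * (7 / 8) ^ (s + 1)) := by gcongr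
          _ = _ := by
              field_simp
              ring
    _ = (n - 2 : ℕ) * (10240 / (n : ℝ) ^ 2) + 1280 / n *
          ∑ s ∈ Finset.Icc 1 (n - 2), ((s + 1 : ℕ) : ℝ) ^ 2 * (7 / 8 : ℝ) ^ (s + 1) := by
        rw [Finset.sum_add_distrib, ← Finset.mul_sum, Finset.sum_const, nsmul_eq_mul]
        simp
    _ ≤ n * (10240 / (n : ℝ) ^ 2) + 1280 / n * K := by
        have h1 : ((n - 2 : ℕ) : ℝ) ≤ n := by exact_mod_cast Nat.sub_le n 2
        have h2 : ∑ s ∈ Finset.Icc 1 (n - 2), ((s + 1 : ℕ) : ℝ) ^ 2 * (7 / 8 : ℝ) ^ (s + 1) ≤ K :=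
          hsum.sum_le_tsum _ (fun s _ => by positivity)
        gcongr
    _ = _ := by
        field_simp

end RandomHypercube

open RandomHypercube in
/-- The total pair sum over all pairs with at least two gaps vanishes as `n → ∞`. -/
theorem sum_c_two_or_more_gaps_tendsto_zero :
    Tendsto (fun n : ℕ =>
        ∑ s ∈ Finset.Icc 1 (n - 2),
          ∑ g ∈ Finset.Icc 2 (min (s + 1) ((n - s) / 2)), c n s g)
      atTop (nhds 0) := by
  obtain ⟨C, hC⟩ := total_bound
  refine tendsto_of_tendsto_of_tendsto_of_le_of_le' tendsto_const_nhds
    (tendsto_const_div_atTop_nhds_zero_nat C) ?_ ?_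
  · exact Eventually.of_forall fun n =>
      Finset.sum_nonneg fun s _ => Finset.sum_nonneg fun g _ => c_nonneg n s g
  · filter_upwards [eventually_ge_atTop 320] with n hn
    exact hC n hn
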